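/- Let (q1,p1,q2,p2) be a rational solution of A5^(2)(α0,α1,α2,α3) and let H be its Hamiltonian. Then, along the cocompact filter on ℂ (i.e., as |t| → ∞), H(t) + t/4 tends to (3/4)·(α0+α1+α3)² − (1/2)·(−2α0+α3)·(−2α1+α3) − 3·(α0+α1)·α3. -/

import Mathlib

open Filter Topology Polynomial

/-- Evaluation of a rational function with complex coefficients at a point,
using its reduced numerator and denominator. -/
noncomputable def evR (f : RatFunc ℂ) (t : ℂ) : ℂ := f.num.eval t / f.denom.eval t

/-- A rational function has no pole at `c` if its reduced denominator does not vanish at `c`. -/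
def NoPoleAt (f : RatFunc ℂ) (c : ℂ) : Prop := f.denom.eval c ≠ 0

/-- `(q1, p1, q2, p2)` is a rational solution of the Sasano system
`A5^(2)(α0, α1, α2, α3)` (the parameter `α2` does not occur in the equations):
the four differential equations hold at every point `t ∈ ℂ` which is not a pole
of any of `q1, p1, q2, p2`. -/
def IsSasanoSol (a0 a1 a3 : ℂ) (q1 p1 q2 p2 : RatFunc ℂ) : Prop :=
  ∀ t : ℂ, NoPoleAt q1 t → NoPoleAt p1 t → NoPoleAt q2 t → NoPoleAt p2 t →
    (t * deriv (evR q1) t =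
      2 * (evR q1 t) ^ 2 * evR p1 t - (evR q1 t) ^ 2 + (a0 + a1 + a3) * evR q1 t
        - t + 4 * t * evR p2 t + 2 * evR q1 t * evR q2 t * evR p2 t) ∧
    (t * deriv (evR p1) t =
      -2 * evR q1 t * (evR p1 t) ^ 2 + 2 * evR q1 t * evR p1 t
        - (a0 + a1 + a3) * evR p1 t + a0 - 2 * evR p1 t * evR q2 t * evR p2 t) ∧
    (t * deriv (evR q2) t =
      2 * (evR q2 t) ^ 2 * evR p2 t - (evR q2 t) ^ 2 + (a0 + a1 + a3) * evR q2 t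
        - t + 4 * t * evR p1 t + 2 * evR q1 t * evR p1 t * evR q2 t) ∧
    (t * deriv (evR p2) t =
      -2 * evR q2 t * (evR p2 t) ^ 2 + 2 * evR q2 t * evR p2 t
        - (a0 + a1 + a3) * evR p2 t + a1 - 2 * evR q1 t * evR p1 t * evR p2 t)

/-- The Hamiltonian of a solution of the Sasano system, as a rational function. -/
noncomputable def sasanoH (a0 a1 a3 : ℂ) (q1 p1 q2 p2 : RatFunc ℂ) : RatFunc ℂ :=
  q1 ^ 2 * p1 ^ 2 - q1 ^ 2 * p1 + RatFunc.C (a0 + a1 + a3) * q1 * p1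
    - RatFunc.C a0 * q1 - RatFunc.X * p1
  + q2 ^ 2 * p2 ^ 2 - q2 ^ 2 * p2 + RatFunc.C (a0 + a1 + a3) * q2 * p2
    - RatFunc.C a1 * q2 - RatFunc.X * p2
  + 4 * RatFunc.X * p1 * p2 + 2 * q1 * p1 * q2 * p2

open Asymptotics Bornology

lemma ev_ne_zero {P : ℂ[X]} (hP : P ≠ 0) : ∀ᶠ t in cobounded ℂ, P.eval t ≠ 0 := by
  have h : ∀ᶠ t in cofinite, P.eval t ≠ 0 := by
    have := (Polynomial.finite_setOfPred_isRoot hP).compl_mem_cofinite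
    filter_upwards [this] with t ht
    simpa using ht
  exact Bornology.le_cofinite ℂ h

lemma bigO_div {A B C D : ℂ[X]} (hB : B ≠ 0) (hD : D ≠ 0) (h : (A * D).degree ≤ (C * B).degree) :
    (fun t => A.eval t / B.eval t) =O[cobounded ℂ] (fun t => C.eval t / D.eval t) := by
  have h1 := Polynomial.isBigO_cobounded_of_degree_le h
  have h2 := h1.mul (isBigO_refl (fun t => 1 / (B.eval t * D.eval t)) (cobounded ℂ))
  refine (h2.congr' ?_ ?_)
  · filter_upwards [ev_ne_zero hB, ev_ne_zero hD] with t h1 h2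
    simp only [Polynomial.eval_mul]; field_simp
  · filter_upwards [ev_ne_zero hB, ev_ne_zero hD] with t h1 h2
    simp only [Polynomial.eval_mul]; field_simp

lemma rat_total (f g : RatFunc ℂ) :
    evR f =O[cobounded ℂ] evR g ∨ evR g =O[cobounded ℂ] evR f := by
  rcases le_total (f.num * g.denom).degree (g.num * f.denom).degree with h | h
  · exact Or.inl (bigO_div f.denom_ne_zero g.denom_ne_zero h)
  · exact Or.inr (bigO_div g.denom_ne_zero f.denom_ne_zero h)

lemma rat_dich1 (f : RatFunc ℂ) :
    evR f =O[cobounded ℂ] (fun _ => (1 : ℂ)) ∨ (fun t : ℂ => t) =O[cobounded ℂ] evR f := by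
  have hev : evR f = fun t => f.num.eval t / f.denom.eval t := rfl
  rw [hev]
  rcases le_or_gt f.num.degree f.denom.degree with h | h
  · left
    simpa using bigO_div (A := f.num) (B := f.denom) (C := 1) (D := 1) f.denom_ne_zero one_ne_zero
      (by simpa using h)
  · right
    simpa using bigO_div (A := X) (B := 1) (C := f.num) (D := f.denom) one_ne_zero f.denom_ne_zero
      (by
        have h0 : f.num ≠ 0 := by rintro h0; simp [h0] at h
        have h1 := Polynomial.natDegree_lt_natDegree f.denom_ne_zero h
        rw [mul_one]
        apply Polynomial.degree_le_of_natDegree_le _ |>.trans_eq (Polynomial.degree_eq_natDegree h0).symm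
        rw [Polynomial.natDegree_X_mul f.denom_ne_zero]; omega)

lemma rat_dich2 (f : RatFunc ℂ) :
    evR f =o[cobounded ℂ] (fun _ => (1 : ℂ)) ∨
      (fun _ : ℂ => (1 : ℂ)) =O[cobounded ℂ] evR f := by
  have hev : evR f = fun t => f.num.eval t / f.denom.eval t := rfl
  rw [hev]
  rcases lt_or_ge f.num.degree f.denom.degree with h | h
  · left
    have h1 := Polynomial.isLittleO_cobounded_of_degree_lt h
    have h2 := h1.mul_isBigO (isBigO_refl (fun t => 1 / (f.denom.eval t)) (cobounded ℂ))
    refine (h2.congr' ?_ ?_)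
    · filter_upwards with t
      simp [div_eq_mul_inv]
    · filter_upwards [ev_ne_zero f.denom_ne_zero] with t h1
      field_simp
  · right
    simpa using bigO_div (A := 1) (B := 1) (C := f.num) (D := f.denom) one_ne_zero f.denom_ne_zero
      (by simpa using h)

lemma rat_deriv (f : RatFunc ℂ) (c : ℂ) :
    (fun t => t * deriv (evR f) t) =O[cobounded ℂ] (fun t => evR f t - c) := by
  set M := f.denom with hM
  set N := f.num - C c * M with hN
  have hM0 : M ≠ 0 := f.denom_ne_zero
  have key : (X * (derivative N * M - N * derivative M) * M).degree ≤ (N * (M * M)).degree := by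
    have e : X * (derivative N * M - N * derivative M) * M
      = (X * derivative N) * (M * M) - N * (X * derivative M) * M := by ring
    have hX : ∀ P : ℂ[X], (X * derivative P).degree ≤ P.degree := by
      intro P
      by_cases hP : derivative P = 0
      · simp [hP]
      · have hP0 : P ≠ 0 := by rintro rfl; simp at hP
        have hd : P.natDegree ≠ 0 := by
          intro h; exact hP (by rw [Polynomial.eq_C_of_natDegree_eq_zero h]; simp)
        have := Polynomial.natDegree_derivative_lt hd
        apply Polynomial.degree_le_of_natDegree_le _ |>.trans_eq
          (Polynomial.degree_eq_natDegree hP0).symm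
        rw [Polynomial.natDegree_X_mul hP]; omega
    rw [e]
    refine (Polynomial.degree_sub_le _ _).trans (max_le ?_ ?_)
    · rw [Polynomial.degree_mul, Polynomial.degree_mul (p := N)]
      gcongr
      exact hX N
    · rw [mul_assoc, Polynomial.degree_mul, Polynomial.degree_mul (p := N), Polynomial.degree_mul,
        Polynomial.degree_mul (p := M)]
      gcongr
      exact hX M
  have := bigO_div (mul_ne_zero hM0 hM0) hM0 key
  refine this.congr' ?_ ?_
  · filter_upwards [ev_ne_zero hM0] with t ht
    have hd : HasDerivAt (evR f) ((f.num.derivative.eval t * M.eval t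
        - f.num.eval t * M.derivative.eval t) / (M.eval t) ^ 2) t :=
      (f.num.hasDerivAt t).div (M.hasDerivAt t) ht
    rw [hd.deriv]
    simp only [hN, Polynomial.eval_mul, Polynomial.eval_sub, Polynomial.derivative_sub,
      Polynomial.derivative_mul, Polynomial.derivative_C, Polynomial.eval_X, Polynomial.eval_add,
      Polynomial.eval_zero, Polynomial.eval_C]
    field_simp
    ring
  · filter_upwards [ev_ne_zero hM0] with t ht
    simp only [hN, evR, Polynomial.eval_mul, Polynomial.eval_sub, Polynomial.eval_C, ← hM]
    field_simp

lemma evR_eq (f : RatFunc ℂ) (t : ℂ) : evR f t = RatFunc.eval (RingHom.id ℂ) t f := rfl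

lemma nopole (f : RatFunc ℂ) : ∀ᶠ t in cobounded ℂ, NoPoleAt f t := ev_ne_zero f.denom_ne_zero

lemma evR_add (f g : RatFunc ℂ) : evR (f + g) =ᶠ[cobounded ℂ] fun t => evR f t + evR g t := by
  filter_upwards [nopole f, nopole g] with t h1 h2
  exact RatFunc.eval_add _ _ h1 h2

lemma evR_mul (f g : RatFunc ℂ) : evR (f * g) =ᶠ[cobounded ℂ] fun t => evR f t * evR g t := by
  filter_upwards [nopole f, nopole g] with t h1 h2
  exact RatFunc.eval_mul _ _ h1 h2

lemma evR_C (c : ℂ) (t : ℂ) : evR (RatFunc.C c) t = c := by simp [evR]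

lemma evR_X (t : ℂ) : evR RatFunc.X t = t := by simp [evR]

/-- `f` evaluates to `F` near infinity. -/
def EvTo (f : RatFunc ℂ) (F : ℂ → ℂ) : Prop := evR f =ᶠ[cobounded ℂ] F

lemma EvTo.add {f g : RatFunc ℂ} {F G : ℂ → ℂ} (hf : EvTo f F) (hg : EvTo g G) :
    EvTo (f + g) (fun t => F t + G t) := by
  filter_upwards [evR_add f g, hf, hg] with t h h1 h2
  rw [h, h1, h2]

lemma EvTo.mul {f g : RatFunc ℂ} {F G : ℂ → ℂ} (hf : EvTo f F) (hg : EvTo g G) :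
    EvTo (f * g) (fun t => F t * G t) := by
  filter_upwards [evR_mul f g, hf, hg] with t h h1 h2
  rw [h, h1, h2]

lemma EvTo.const (c : ℂ) : EvTo (RatFunc.C c) (fun _ => c) := by
  filter_upwards with t using evR_C c t

lemma EvTo.sub {f g : RatFunc ℂ} {F G : ℂ → ℂ} (hf : EvTo f F) (hg : EvTo g G) :
    EvTo (f - g) (fun t => F t - G t) := by
  have := hf.add ((EvTo.const (-1)).mul hg)
  have e : f + RatFunc.C (-1) * g = f - g := by simp [sub_eq_add_neg]
  rw [e] at this
  simpa [sub_eq_add_neg] using this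

lemma EvTo.sq {f : RatFunc ℂ} {F : ℂ → ℂ} (hf : EvTo f F) :
    EvTo (f ^ 2) (fun t => F t ^ 2) := by
  simpa [pow_two] using hf.mul hf

lemma EvTo.self (f : RatFunc ℂ) : EvTo f (evR f) := EventuallyEq.rfl

lemma EvTo.X : EvTo RatFunc.X (fun t => t) := by
  filter_upwards with t using evR_X t

lemma evR_H (a0 a1 a3 : ℂ) (q1 p1 q2 p2 : RatFunc ℂ) :
    EvTo (sasanoH a0 a1 a3 q1 p1 q2 p2) (fun t =>
      evR q1 t ^ 2 * evR p1 t ^ 2 - evR q1 t ^ 2 * evR p1 t + (a0 + a1 + a3) * evR q1 t * evR p1 t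
    - a0 * evR q1 t - t * evR p1 t
  + evR q2 t ^ 2 * evR p2 t ^ 2 - evR q2 t ^ 2 * evR p2 t + (a0 + a1 + a3) * evR q2 t * evR p2 t
    - a1 * evR q2 t - t * evR p2 t
  + 4 * t * evR p1 t * evR p2 t + 2 * evR q1 t * evR p1 t * evR q2 t * evR p2 t) := by
  have e4 : EvTo 4 (fun _ => 4) := by rw [← map_ofNat RatFunc.C 4]; exact EvTo.const 4
  have e2 : EvTo 2 (fun _ => 2) := by rw [← map_ofNat RatFunc.C 2]; exact EvTo.const 2
  have h1 := EvTo.self q1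
  have h2 := EvTo.self p1
  have h3 := EvTo.self q2
  have h4 := EvTo.self p2
  have hs := EvTo.const (a0 + a1 + a3)
  have hX := EvTo.X
  exact ((((((((((((h1.sq.mul h2.sq).sub (h1.sq.mul h2)).add ((hs.mul h1).mul h2)).sub
    ((EvTo.const a0).mul h1)).sub (hX.mul h2)).add (h3.sq.mul h4.sq)).sub (h3.sq.mul h4)).add
    ((hs.mul h3).mul h4)).sub ((EvTo.const a1).mul h3)).sub (hX.mul h4)).add
    (((e4.mul hX).mul h2).mul h4)).add ((((e2.mul h1).mul h2).mul h3).mul h4))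

lemma t_not_bdd : ¬ (fun t : ℂ => t) =O[cobounded ℂ] (fun _ => (1 : ℂ)) := by
  intro h
  have h1 : (fun _ : ℂ => (1 : ℂ)) =o[cobounded ℂ] (fun t : ℂ => t) :=
    isLittleO_const_id_cobounded (1 : ℂ)
  exact (h1.trans_isBigO h).not_isBigO (Eventually.frequently (by simp)) (isBigO_refl _ _)

lemma one_o_t : (fun _ : ℂ => (1 : ℂ)) =o[cobounded ℂ] (fun t : ℂ => t) :=
  isLittleO_const_id_cobounded (1 : ℂ)

lemma t_not_o : ¬ (fun t : ℂ => t) =o[cobounded ℂ] (fun t : ℂ => t) := by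
  intro h
  refine h.not_isBigO (Eventually.frequently ?_) (isBigO_refl _ _)
  exact (Bornology.le_cofinite ℂ) (by simp)

lemma ne_of_one_O {p : ℂ → ℂ} (h : (fun _ : ℂ => (1 : ℂ)) =O[cobounded ℂ] p) :
    ∀ᶠ t in cobounded ℂ, p t ≠ 0 := by
  filter_upwards [h.eq_zero_imp] with t ht h0
  exact one_ne_zero (ht h0)

lemma cancel {p y z : ℂ → ℂ} (hp : ∀ᶠ t in cobounded ℂ, p t ≠ 0)
    (h : (fun t => p t * y t) =O[cobounded ℂ] (fun t => p t * z t)) : y =O[cobounded ℂ] z := by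
  refine ((isBigO_refl (fun t => (p t)⁻¹) (cobounded ℂ)).mul h).congr' ?_ ?_
  · filter_upwards [hp] with t ht
    field_simp
  · filter_upwards [hp] with t ht
    field_simp

lemma blow {q : ℂ → ℂ} (ht : (fun t : ℂ => t) =O[cobounded ℂ] q)
    (h : (fun t => q t * q t) =O[cobounded ℂ] q) : False := by
  have h1 := ne_of_one_O (one_o_t.isBigO.trans ht)
  have h2 : q =O[cobounded ℂ] (fun _ => (1 : ℂ)) := cancel h1 (by simpa using h)
  exact t_not_bdd (ht.trans h2)

/-- both `p`s vanish at infinity: impossible -/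
lemma case_small (s : ℂ) {q1 p1 q2 p2 x d : ℂ → ℂ}
    (hdich : q1 =O[cobounded ℂ] (fun _ => (1 : ℂ)) ∨ (fun t : ℂ => t) =O[cobounded ℂ] q1)
    (hd : d =O[cobounded ℂ] q1) (hq : q2 =O[cobounded ℂ] q1)
    (hp1 : p1 =o[cobounded ℂ] (fun _ => (1 : ℂ))) (hp2 : p2 =o[cobounded ℂ] (fun _ => (1 : ℂ)))
    (hx : ∀ t, x t = q1 t * p1 t + q2 t * p2 t)
    (he : ∀ᶠ t in cobounded ℂ, d t = 2 * q1 t * x t - q1 t ^ 2 + s * q1 t - t + 4 * t * p2 t) :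
    False := by
  have hxo : x =o[cobounded ℂ] q1 := by
    have h1 : (fun t => q1 t * p1 t) =o[cobounded ℂ] (fun t => q1 t * 1) :=
      (isBigO_refl q1 _).mul_isLittleO hp1
    have h2 : (fun t => q2 t * p2 t) =o[cobounded ℂ] (fun t => q1 t * 1) :=
      hq.mul_isLittleO hp2
    simpa [funext hx] using h1.add h2
  have htp : (fun t => 4 * (t * p2 t)) =o[cobounded ℂ] (fun t : ℂ => t) := by
    simpa using ((isBigO_refl (fun t : ℂ => t) _).mul_isLittleO hp2).const_mul_left 4
  rcases hdich with h | h
  · apply t_not_o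
    have hx1 : x =O[cobounded ℂ] (fun _ => (1 : ℂ)) := hxo.isBigO.trans h
    have a1 : (fun t => 2 * (q1 t * x t)) =O[cobounded ℂ] (fun _ => (1 : ℂ)) := by
      simpa using (h.mul hx1).const_mul_left 2
    have a2 : (fun t => q1 t * q1 t) =O[cobounded ℂ] (fun _ => (1 : ℂ)) := by
      simpa using h.mul h
    have a3 := h.const_mul_left s
    have a4 := (((a1.sub a2).add a3).sub (hd.trans h)).trans_isLittleO one_o_t
    refine (a4.add htp).congr' ?_ EventuallyEq.rfl
    filter_upwards [he] with t ht
    rw [ht]; ring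
  · have hb : q1 =o[cobounded ℂ] (fun t => q1 t * q1 t) := by
      have := (one_o_t.trans_isBigO h).mul_isBigO (isBigO_refl q1 (cobounded ℂ))
      simpa using this
    have a1 : (fun t => 2 * (q1 t * x t)) =o[cobounded ℂ] (fun t => q1 t * q1 t) :=
      ((isBigO_refl q1 _).mul_isLittleO hxo).const_mul_left 2
    have a3 := (hb.const_mul_left s)
    have a4 := hd.trans_isLittleO hb
    have a5 := h.trans_isLittleO hb
    have a6 := htp.trans_isBigO a5.isBigO
    have : (fun t => q1 t * q1 t) =o[cobounded ℂ] (fun t => q1 t * q1 t) := by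
      refine ((((a1.add a3).sub a4).sub a5).add a6).congr' ?_ EventuallyEq.rfl
      filter_upwards [he] with t ht
      rw [ht]; ring
    refine this.not_isBigO (Eventually.frequently ?_) (isBigO_refl _ _)
    filter_upwards [ne_of_one_O (one_o_t.isBigO.trans h)] with t ht
    exact mul_ne_zero ht ht

/-- from the `p` equation: `q - x` is bounded if `p` does not vanish at infinity -/
lemma bdd_of_p (s a : ℂ) {q p x d : ℂ → ℂ}
    (hd : d =O[cobounded ℂ] p) (hp : (fun _ => (1 : ℂ)) =O[cobounded ℂ] p)
    (he : ∀ᶠ t in cobounded ℂ, d t = - 2 * p t * x t + 2 * q t * p t - s * p t + a) :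
    (fun t => q t - x t) =O[cobounded ℂ] (fun _ => (1 : ℂ)) := by
  have h1 : (fun t => p t * (2 * (q t - x t))) =O[cobounded ℂ] (fun t => p t * 1) := by
    have ha : (fun _ : ℂ => a) =O[cobounded ℂ] p := by
      simpa using (hp.const_mul_left a)
    have := (hd.add ((isBigO_refl p (cobounded ℂ)).const_mul_left s)).sub ha
    refine this.congr' ?_ (by simp)
    filter_upwards [he] with t ht
    rw [ht]; ring
  have h2 := (cancel (ne_of_one_O hp) h1).const_mul_left (1 / 2)
  refine h2.congr_left (fun t => by ring)

/-- exactly one `p` vanishes at infinity: impossible -/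
lemma case_mixed (s a : ℂ) {p1 q2 p2 x d e : ℂ → ℂ}
    (hdich : q2 =O[cobounded ℂ] (fun _ => (1 : ℂ)) ∨ (fun t : ℂ => t) =O[cobounded ℂ] q2)
    (hd : d =O[cobounded ℂ] q2) (he : e =O[cobounded ℂ] p2)
    (hp1 : p1 =o[cobounded ℂ] (fun _ => (1 : ℂ))) (hp2 : (fun _ => (1 : ℂ)) =O[cobounded ℂ] p2)
    (hdq : ∀ᶠ t in cobounded ℂ, d t = 2 * q2 t * x t - q2 t ^ 2 + s * q2 t - t + 4 * t * p1 t)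
    (hep : ∀ᶠ t in cobounded ℂ, e t = - 2 * p2 t * x t + 2 * q2 t * p2 t - s * p2 t + a) :
    False := by
  have hB := bdd_of_p s a he hp2 hep
  have htp : (fun t => 4 * (t * p1 t)) =o[cobounded ℂ] (fun t : ℂ => t) := by
    simpa using ((isBigO_refl (fun t : ℂ => t) _).mul_isLittleO hp1).const_mul_left 4
  have b1 : (fun t => 2 * (q2 t * (q2 t - x t))) =O[cobounded ℂ] q2 := by
    simpa using ((isBigO_refl q2 (cobounded ℂ)).mul hB).const_mul_left 2
  have b3 := ((isBigO_refl q2 (cobounded ℂ)).const_mul_left s)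
  rcases hdich with h | h
  · apply t_not_o
    have a2 : (fun t => q2 t * q2 t) =O[cobounded ℂ] (fun _ => (1 : ℂ)) := by
      simpa using h.mul h
    have a4 := (((a2.sub (b1.trans h)).add (b3.trans h)).sub (hd.trans h)).trans_isLittleO one_o_t
    refine (a4.add htp).congr' ?_ EventuallyEq.rfl
    filter_upwards [hdq] with t ht
    rw [ht]; ring
  · apply blow h
    refine ((((hd.add b1).sub b3).add h).sub (htp.isBigO.trans h)).congr' ?_ EventuallyEq.rfl
    filter_upwards [hdq] with t ht
    rw [ht]; ring

lemma p_relation (s : ℂ) {q p x d : ℂ → ℂ} (hd : d =O[cobounded ℂ] q)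
    (hA : (fun t => q t - x t) =O[cobounded ℂ] (fun _ => (1 : ℂ)))
    (hdq : ∀ᶠ t in cobounded ℂ, d t = 2 * q t * x t - q t ^ 2 + s * q t - t + 4 * t * p t) :
    (fun t => t * (4 * p t - 1) + q t * q t) =O[cobounded ℂ] q := by
  have b1 : (fun t => 2 * (q t * (q t - x t))) =O[cobounded ℂ] q := by
    simpa using ((isBigO_refl q (cobounded ℂ)).mul hA).const_mul_left 2
  have b3 := ((isBigO_refl q (cobounded ℂ)).const_mul_left s)
  refine ((hd.add b1).sub b3).congr' ?_ EventuallyEq.rfl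
  filter_upwards [hdq] with t ht
  rw [ht]; ring

/-- neither `p` vanishes at infinity: then `q1` is bounded -/
lemma case_large {q1 p1 q2 p2 x : ℂ → ℂ}
    (h : (fun t : ℂ => t) =O[cobounded ℂ] q1)
    (hA : (fun t => q1 t - x t) =O[cobounded ℂ] (fun _ => (1 : ℂ)))
    (hB : (fun t => q2 t - x t) =O[cobounded ℂ] (fun _ => (1 : ℂ)))
    (hx : ∀ t, x t = q1 t * p1 t + q2 t * p2 t)
    (h2 : (fun t => t * (4 * p2 t - 1) + q1 t * q1 t) =O[cobounded ℂ] q1)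
    (h1 : (fun t => t * (4 * p1 t - 1) + q2 t * q2 t) =O[cobounded ℂ] q2) : False := by
  have h1q : (fun _ => (1 : ℂ)) =O[cobounded ℂ] q1 := one_o_t.isBigO.trans h
  have hBA : (fun t => q2 t - q1 t) =O[cobounded ℂ] (fun _ => (1 : ℂ)) :=
    (hB.sub hA).congr_left (fun t => by ring)
  have hq2 : q2 =O[cobounded ℂ] q1 :=
    ((hBA.trans h1q).add (isBigO_refl q1 _)).congr_left (fun t => by ring)
  have r := isBigO_refl q1 (cobounded ℂ)
  have qq : q1 =O[cobounded ℂ] (fun t => q1 t * q1 t) := by simpa using h1q.mul r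
  -- `4 t x` in two ways
  have c1 : (fun t => q1 t * (t * (4 * p1 t - 1) + q2 t * q2 t)) =O[cobounded ℂ]
      (fun t => q1 t * q1 t) := r.mul (h1.trans hq2)
  have c2 : (fun t => q2 t * (t * (4 * p2 t - 1) + q1 t * q1 t)) =O[cobounded ℂ]
      (fun t => q1 t * q1 t) := hq2.mul h2
  have c3 : (fun t => 4 * (t * (q1 t - x t))) =O[cobounded ℂ] (fun t => q1 t * q1 t) := by
    have := (h.mul hA).const_mul_left 4
    simp only [mul_one] at this
    exact this.trans qq
  have c4 : (fun t => 3 * (t * q1 t)) =O[cobounded ℂ] (fun t => q1 t * q1 t) :=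
    (h.mul r).const_mul_left 3
  have c5 : (fun t => t * q2 t) =O[cobounded ℂ] (fun t => q1 t * q1 t) := h.mul hq2
  have c6 : (fun t => q1 t * q1 t * (q2 t - q1 t)) =O[cobounded ℂ] (fun t => q1 t * q1 t) := by
    simpa using (r.mul r).mul hBA
  have c7 : (fun t => q1 t * (q2 t * (q2 t - q1 t))) =O[cobounded ℂ] (fun t => q1 t * q1 t) := by
    simpa using r.mul (hq2.mul hBA)
  -- q1 q2 (q1+q2) = 2 q1^3 + 2 c6 + c7
  have c8 : (fun t => q1 t * (q1 t * q1 t)) =O[cobounded ℂ] (fun t => q1 t * q1 t) := by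
    refine ((((((((c1.add c2).add c3).sub c4).add c5).sub c6).sub c6).sub c7).const_mul_left
      (1 / 2)).congr_left (fun t => ?_)
    simp only [hx]; ring
  exact blow h (cancel (ne_of_one_O h1q) c8)

lemma lim_of_bdd {p : ℂ → ℂ}
    (h : (fun t => t * (4 * p t - 1)) =O[cobounded ℂ] (fun _ => (1 : ℂ))) :
    Tendsto p (cobounded ℂ) (𝓝 (1 / 4)) := by
  have hi : Tendsto (fun t : ℂ => t⁻¹) (cobounded ℂ) (𝓝 0) := tendsto_inv₀_cobounded
  have h1 : (fun t : ℂ => t⁻¹ * (t * (4 * p t - 1))) =o[cobounded ℂ] (fun _ => (1 : ℂ) * 1) :=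
    ((isLittleO_one_iff ℂ).2 hi).mul_isBigO h
  rw [one_mul, isLittleO_one_iff] at h1
  have h2 : Tendsto (fun t => 4 * p t - 1) (cobounded ℂ) (𝓝 0) := by
    refine h1.congr' ?_
    filter_upwards [eventually_ne_cobounded (0 : ℂ)] with t ht
    field_simp
  have h3 := (h2.add_const 1).mul_const (1 / 4)
  rw [zero_add, one_mul] at h3
  refine h3.congr (fun t => by ring)

lemma lim_qx (s a : ℂ) {q p x d : ℂ → ℂ} (hp : Tendsto p (cobounded ℂ) (𝓝 (1 / 4)))
    (hd : d =O[cobounded ℂ] (fun t => p t - 1 / 4))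
    (he : ∀ᶠ t in cobounded ℂ, d t = - 2 * p t * x t + 2 * q t * p t - s * p t + a) :
    Tendsto (fun t => q t - x t) (cobounded ℂ) (𝓝 (s / 2 - 2 * a)) := by
  have hp0 : Tendsto (fun t => p t - 1 / 4) (cobounded ℂ) (𝓝 0) := by
    simpa using hp.sub_const (1 / 4)
  have hd0 := hd.trans_tendsto hp0
  have h1 := ((hd0.add (hp.const_mul s)).sub_const a).div (hp.const_mul 2) (by norm_num)
  have e : (0 + s * (1 / 4) - a) / (2 * (1 / 4)) = s / 2 - 2 * a := by ring
  rw [e] at h1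
  refine h1.congr' ?_
  filter_upwards [he, hp.eventually_ne (show (1 / 4 : ℂ) ≠ 0 by norm_num)] with t ht h0
  simp only [Pi.div_apply]
  rw [ht]
  field_simp
  ring

theorem sasano_hamiltonian_limit_at_infinity (a0 a1 a2 a3 : ℂ)
    (hpar : a0 + a1 + 2 * a2 + a3 = 1 / 2)
    (q1 p1 q2 p2 : RatFunc ℂ)
    (hsol : IsSasanoSol a0 a1 a3 q1 p1 q2 p2) :
    Tendsto (fun t : ℂ => evR (sasanoH a0 a1 a3 q1 p1 q2 p2) t + t / 4) (cocompact ℂ)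
      (𝓝 (3 / 4 * (a0 + a1 + a3) ^ 2
        - 1 / 2 * (-2 * a0 + a3) * (-2 * a1 + a3) - 3 * (a0 + a1) * a3)) := by
  rw [← Metric.cobounded_eq_cocompact]
  have hH := evR_H a0 a1 a3 q1 p1 q2 p2
  obtain ⟨s, hs⟩ : ∃ s, s = a0 + a1 + a3 := ⟨_, rfl⟩
  set Q1 := evR q1 with hQ1
  set P1 := evR p1 with hP1
  set Q2 := evR q2 with hQ2
  set P2 := evR p2 with hP2
  obtain ⟨x, hx⟩ : ∃ x : ℂ → ℂ, ∀ t, x t = Q1 t * P1 t + Q2 t * P2 t := ⟨_, fun _ => rfl⟩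
  have hx' : ∀ t, x t = Q2 t * P2 t + Q1 t * P1 t := fun t => by rw [hx]; ring
  have hev : ∀ᶠ t in cobounded ℂ, _ :=
    ((nopole q1).and ((nopole p1).and ((nopole q2).and (nopole p2)))).mono
      (fun t h => hsol t h.1 h.2.1 h.2.2.1 h.2.2.2)
  have e1 : ∀ᶠ t in cobounded ℂ, t * deriv Q1 t
      = 2 * Q1 t * x t - Q1 t ^ 2 + s * Q1 t - t + 4 * t * P2 t := by
    filter_upwards [hev] with t ht
    rw [ht.1, hx, hs]; ring
  have e2 : ∀ᶠ t in cobounded ℂ, t * deriv P1 t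
      = - 2 * P1 t * x t + 2 * Q1 t * P1 t - s * P1 t + a0 := by
    filter_upwards [hev] with t ht
    rw [ht.2.1, hx, hs]; ring
  have e3 : ∀ᶠ t in cobounded ℂ, t * deriv Q2 t
      = 2 * Q2 t * x t - Q2 t ^ 2 + s * Q2 t - t + 4 * t * P1 t := by
    filter_upwards [hev] with t ht
    rw [ht.2.2.1, hx, hs]; ring
  have e4 : ∀ᶠ t in cobounded ℂ, t * deriv P2 t
      = - 2 * P2 t * x t + 2 * Q2 t * P2 t - s * P2 t + a1 := by
    filter_upwards [hev] with t ht
    rw [ht.2.2.2, hx, hs]; ring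
  have dQ1 : (fun t => t * deriv Q1 t) =O[cobounded ℂ] Q1 := by simpa using rat_deriv q1 0
  have dP1 : (fun t => t * deriv P1 t) =O[cobounded ℂ] P1 := by simpa using rat_deriv p1 0
  have dQ2 : (fun t => t * deriv Q2 t) =O[cobounded ℂ] Q2 := by simpa using rat_deriv q2 0
  have dP2 : (fun t => t * deriv P2 t) =O[cobounded ℂ] P2 := by simpa using rat_deriv p2 0
  have bP1 : (fun _ => (1 : ℂ)) =O[cobounded ℂ] P1 := by
    rcases rat_dich2 p1 with h1 | h1
    · exfalso
      rcases rat_dich2 p2 with h2 | h2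
      · rcases rat_total q1 q2 with h | h
        · exact case_small s (rat_dich1 q2) dQ2 h h2 h1 hx' e3
        · exact case_small s (rat_dich1 q1) dQ1 h h1 h2 hx e1
      · exact case_mixed s a1 (rat_dich1 q2) dQ2 dP2 h1 h2 e3 e4
    · exact h1
  have bP2 : (fun _ => (1 : ℂ)) =O[cobounded ℂ] P2 := by
    rcases rat_dich2 p2 with h2 | h2
    · exact (case_mixed s a0 (rat_dich1 q1) dQ1 dP1 h2 bP1 e1 e2).elim
    · exact h2
  have hA := bdd_of_p s a0 dP1 bP1 e2
  have hB := bdd_of_p s a1 dP2 bP2 e4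
  have r2 := p_relation s dQ1 hA e1
  have r1 := p_relation s dQ2 hB e3
  have bQ1 : Q1 =O[cobounded ℂ] (fun _ => (1 : ℂ)) := by
    rcases rat_dich1 q1 with h | h
    · exact h
    · exact (case_large h hA hB hx r2 r1).elim
  have bQ2 : Q2 =O[cobounded ℂ] (fun _ => (1 : ℂ)) :=
    ((hB.sub hA).add bQ1).congr_left (fun t => by ring)
  have t2 : (fun t => t * (4 * P2 t - 1)) =O[cobounded ℂ] (fun _ => (1 : ℂ)) := by
    have h : (fun t => Q1 t * Q1 t) =O[cobounded ℂ] (fun _ => (1 : ℂ)) := by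
      simpa using bQ1.mul bQ1
    exact ((r2.trans bQ1).sub h).congr_left (fun t => by ring)
  have t1 : (fun t => t * (4 * P1 t - 1)) =O[cobounded ℂ] (fun _ => (1 : ℂ)) := by
    have h : (fun t => Q2 t * Q2 t) =O[cobounded ℂ] (fun _ => (1 : ℂ)) := by
      simpa using bQ2.mul bQ2
    exact ((r1.trans bQ2).sub h).congr_left (fun t => by ring)
  have l1 := lim_of_bdd t1
  have l2 := lim_of_bdd t2
  have m1 := lim_qx s a0 l1 (rat_deriv p1 (1 / 4)) e2
  have m2 := lim_qx s a1 l2 (rat_deriv p2 (1 / 4)) e4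
  have z1 : Tendsto (fun t => P1 t - 1 / 4) (cobounded ℂ) (𝓝 0) := by
    simpa using l1.sub_const (1 / 4)
  have z2 : Tendsto (fun t => P2 t - 1 / 4) (cobounded ℂ) (𝓝 0) := by
    simpa using l2.sub_const (1 / 4)
  have w1 : Tendsto (fun t => Q1 t * (P1 t - 1 / 4)) (cobounded ℂ) (𝓝 0) := by
    have := bQ1.mul_isLittleO ((isLittleO_one_iff ℂ).2 z1)
    rw [one_mul, isLittleO_one_iff] at this
    exact this
  have w2 : Tendsto (fun t => Q2 t * (P2 t - 1 / 4)) (cobounded ℂ) (𝓝 0) := by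
    have := bQ2.mul_isLittleO ((isLittleO_one_iff ℂ).2 z2)
    rw [one_mul, isLittleO_one_iff] at this
    exact this
  have w3 : Tendsto (fun t => t * (4 * P1 t - 1) * (P2 t - 1 / 4)) (cobounded ℂ) (𝓝 0) := by
    have := t1.mul_isLittleO ((isLittleO_one_iff ℂ).2 z2)
    rw [one_mul, isLittleO_one_iff] at this
    exact this
  have lx : Tendsto x (cobounded ℂ)
      (𝓝 (((s / 2 - 2 * a0) + (s / 2 - 2 * a1) + 4 * (0 + 0)) * (1 / 2))) := by
    refine (((m1.add m2).add ((w1.add w2).const_mul 4)).mul_const (1 / 2)).congr (fun t => ?_)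
    simp only [hx]; ring
  have lq1 := m1.add lx
  have lq2 := m2.add lx
  have big := ((((((lx.pow 2).sub ((lq1.pow 2).mul l1)).sub ((lq2.pow 2).mul l2)).add
    (lx.const_mul s)).sub (lq1.const_mul a0)).sub (lq2.const_mul a1)).add w3
  have fin := big.congr' (f₂ := fun t : ℂ =>
      evR (sasanoH a0 a1 a3 q1 p1 q2 p2) t + t / 4) (by
    filter_upwards [hH] with t ht
    rw [ht, ← hs, hx]; ring)
  convert fin using 2
  rw [hs]; ring
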